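/- Let (E,T,S,e) be a conditionally ergodic conditional expectation preserving system with T strictly positive and S a surjective Riesz homomorphism, assume every upward directed subset D of E₊ for which {Tf : f ∈ D} is order bounded in E has a supremum in E, and assume (S,e) is aperiodic. Then for each real ε with 0 < ε < 1 there exists a surjective Riesz homomorphism S' on E such that (E,T,S',e) is a conditional expectation preserving system (in particular S' is order continuous, S'e = e and TS'f = Tf for all f ∈ E), (S',e) is periodic, and T|(S − S')u| ≤ ε·e for every component u of e. -/

import Mathlib

noncomputable section

open Function Set

variable {E : Type*}

/-- `e` is a weak order unit: `e > 0` and `e ⊓ |x| = 0` implies `x = 0`. -/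
def WeakOrderUnit [Lattice E] [AddCommGroup E] (e : E) : Prop :=
  0 < e ∧ ∀ x : E, e ⊓ (x ⊔ -x) = 0 → x = 0

/-- `p` is a component of `q ∈ E₊`: `0 ≤ p ≤ q` and `(q - p) ⊓ p = 0`. -/
def IsComponent [Lattice E] [AddCommGroup E] (q p : E) : Prop :=
  0 ≤ p ∧ p ≤ q ∧ (q - p) ⊓ p = 0

/-- `partialSup f n = ⋁_{j < n} f j`, with the empty supremum equal to `0`. -/
def partialSup [Lattice E] [Zero E] (f : ℕ → E) : ℕ → E
  | 0 => 0
  | n + 1 => partialSup f n ⊔ f n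

/-- The band projection of `e` onto the band generated by `g`: `P_g e = ⨆_{m ∈ ℕ} (e ⊓ m•g)`. -/
def bandProjApp [ConditionallyCompleteLattice E] [AddCommGroup E] (g e : E) : E :=
  ⨆ m : ℕ, e ⊓ m • g

/-- `qComp Sinv e p k = p ⊓ S⁻ᵏp ⊓ (e - ⋁_{j=1}^{k-1} S⁻ʲp)` (empty supremum is `0`). -/
def qComp [Lattice E] [AddCommGroup E] (Sinv : E → E) (e p : E) (k : ℕ) : E :=
  p ⊓ Sinv^[k] p ⊓ (e - partialSup (fun j => Sinv^[j + 1] p) (k - 1))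

/-- `(E,T,S,e)` is a conditional expectation preserving system: `E` is a Dedekind complete
Riesz space (typeclass assumptions), `e` is a weak order unit, `T` is a strictly positive
conditional expectation operator with `Te = e`, and `S` is an order-continuous Riesz
homomorphism with `Se = e` and `TS = T`. -/
structure IsCEPS [ConditionallyCompleteLattice E] [AddCommGroup E] [Module ℝ E]
    (T S : E →ₗ[ℝ] E) (e : E) : Prop where
  unit : WeakOrderUnit e
  T_pos : ∀ f : E, 0 ≤ f → 0 ≤ T f
  T_strictPos : ∀ f : E, 0 ≤ f → T f = 0 → f = 0
  T_proj : ∀ f : E, T (T f) = T f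
  T_ordCont : ∀ D : Set E, D.Nonempty → DirectedOn (· ≥ ·) D → IsGLB D 0 →
    IsGLB ((⇑T) '' D) 0
  T_range_sublattice : ∀ x ∈ Set.range T, ∀ y ∈ Set.range T, x ⊔ y ∈ Set.range T
  T_range_dedekind : ∀ D : Set E, D ⊆ Set.range T → D.Nonempty →
    (∃ b ∈ Set.range T, ∀ x ∈ D, x ≤ b) →
    ∃ s ∈ Set.range T, (∀ x ∈ D, x ≤ s) ∧ ∀ b ∈ Set.range T, (∀ x ∈ D, x ≤ b) → s ≤ b
  T_weakUnit : ∀ u : E, WeakOrderUnit u → WeakOrderUnit (T u)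
  Te : T e = e
  S_hom : ∀ x y : E, S (x ⊔ y) = S x ⊔ S y
  S_ordCont : ∀ D : Set E, D.Nonempty → DirectedOn (· ≥ ·) D → IsGLB D 0 →
    IsGLB ((⇑S) '' D) 0
  Se : S e = e
  TS : ∀ f : E, T (S f) = T f

/-- `E` is `T`-universally complete: every upward directed subset `D` of `E₊` for which
`T '' D` is order bounded in `E` has a supremum in `E`. -/
def TUnivComplete [ConditionallyCompleteLattice E] [AddCommGroup E] [Module ℝ E]
    (T : E →ₗ[ℝ] E) : Prop :=
  ∀ D : Set E, D.Nonempty → D ⊆ {x : E | 0 ≤ x} → DirectedOn (· ≤ ·) D →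
    BddAbove ((⇑T) '' D) → BddBelow ((⇑T) '' D) → ∃ s : E, IsLUB D s

/-- `(S, v)` is aperiodic (with `Sinv` the inverse of `S`): for every `N ∈ ℕ` and every
nonzero component `c` of `v` there exist `k ≥ N` and a component `u` of `c` with
`q(u,k) ≠ 0`. -/
def IsAperiodic [Lattice E] [AddCommGroup E] (Sinv : E → E) (e v : E) : Prop :=
  ∀ N : ℕ, ∀ c : E, IsComponent v c → c ≠ 0 →
    ∃ k : ℕ, N ≤ k ∧ ∃ u : E, IsComponent c u ∧ qComp Sinv e u k ≠ 0

/-- `(S, e)` is periodic (with `Sinv` the inverse of `S`): there is `N ∈ ℕ` such that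
`q(c,k) = 0` for all `k ≥ N` and all components `c` of `e` with `0 ≠ c ≠ e`. -/
def IsPeriodic [Lattice E] [AddCommGroup E] (Sinv : E → E) (e : E) : Prop :=
  ∃ N : ℕ, ∀ c : E, IsComponent e c → c ≠ 0 → c ≠ e → ∀ k : ℕ, N ≤ k → qComp Sinv e c k = 0

/-!
The components of `e` form a complete Boolean algebra on which `S` acts by automorphisms, so
Rokhlin's lemma can be run there: with `N = n ^ 2`, Zorn's lemma and aperiodicity give a component
`a` whose first `N` iterates are disjoint, so that `T a ≤ N⁻¹ e`, and which no point avoids forever,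
because `T` is strictly positive and `S`-invariant. Sorting points by the time of their first visit
to `a` modulo `n` yields `g` such that `g, S g, …, S ^ (n - 1) g` are disjoint and miss only a part
of `⋁_{1 ≤ i ≤ n} S ^ i a`. Let `S'` agree with `S` on the levels below the top, send the top level
back to the base, and fix everything outside the tower. Then `S'` has finite order, and it differs
from `S` only on the top level and outside the tower, which have `T`-size at most `n⁻¹ e` each.

The band projections onto the levels composed with powers of `S` form a system of matrix units, in
which `S'` is the permutation matrix of a rotation.
-/

section Rokhlin

variable {B : Type*} [CompleteBooleanAlgebra B] (s : B ≃o B)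

/-- `a` is disjoint from its first `N - 1` iterates under `s`, so that `a, s a, …, s ^ (N - 1) a`
are pairwise disjoint. -/
def IsWandering (N : ℕ) (a : B) : Prop :=
  ∀ j, 0 < j → j < N → Disjoint a ((s ^ j) a)

theorem exists_maximal_isWandering (N : ℕ) : ∃ a, Maximal (IsWandering s N) a := by
  refine zorn_le₀ {a | IsWandering s N a} fun c hc hchain => ⟨sSup c, ?_, fun _ => le_sSup⟩
  intro j hj hjN
  simp only [OrderIso.map_sSup, sSup_disjoint_iff, disjoint_iSup_iff]
  intro b hb a ha
  rcases hchain.total ha hb with hab | hba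
  · exact (hc hb j hj hjN).mono_left hab
  · exact (hc ha j hj hjN).mono_right ((s ^ j).monotone hba)

variable {s} in
theorem IsWandering.sup {N : ℕ} {a w : B} (ha : IsWandering s N a) (hw : IsWandering s N w)
    (h : ∀ j, Disjoint a ((s ^ j) w) ∧ Disjoint w ((s ^ j) a)) : IsWandering s N (a ⊔ w) := by
  intro j hj hjN
  simp only [OrderIso.map_sup, disjoint_sup_left, disjoint_sup_right]
  exact ⟨⟨ha j hj hjN, (h j).2⟩, (h j).1, hw j hj hjN⟩

variable {s} in
theorem IsWandering.pairwise_disjoint {N : ℕ} {a : B} (h : IsWandering s N a) :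
    Pairwise (Disjoint on fun i : Fin N => (s ^ (i : ℕ)) a) := by
  refine (pairwise_disjoint_on _).2 fun i j hij => ?_
  have hmap := (h (j - i) (by omega) (by omega)).map_orderIso (s ^ (i : ℕ))
  rwa [← RelIso.mul_apply, pow_mul_pow_sub s (show (i : ℕ) ≤ j by omega)] at hmap

variable {s} in
theorem IsWandering.of_inv {N : ℕ} {a : B} (h : IsWandering s⁻¹ N a) : IsWandering s N a := by
  intro j hj hjN
  have hmap : Disjoint ((s ^ j) a) ((s ^ j) ((s⁻¹ ^ j) a)) := (h j hj hjN).map_orderIso (s ^ j)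
  rwa [inv_pow, RelIso.apply_inv_self, disjoint_comm] at hmap

theorem exists_isWandering_iSup_eq_top (N : ℕ)
    (hfree : ∀ c : B, c ≠ ⊥ → ∃ w ≤ c, w ≠ ⊥ ∧ IsWandering s N w)
    (hcons : ∀ b : B, s⁻¹ b ≤ b → s⁻¹ b = b) :
    ∃ a, IsWandering s N a ∧ ⨆ j : ℕ, (s⁻¹ ^ j) a = ⊤ := by
  obtain ⟨a, ha⟩ := exists_maximal_isWandering s N
  refine ⟨a, ha.prop, ?_⟩
  set b := ⨆ j : ℕ, (s⁻¹ ^ j) a with hb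
  have hab : a ≤ b := le_iSup_of_le 0 le_rfl
  have hinv : s⁻¹ b = b := by
    refine hcons b ?_
    rw [hb, OrderIso.map_iSup]
    exact iSup_le fun j => le_iSup_of_le (j + 1) (by rw [pow_succ', RelIso.mul_apply])
  have hs : s b = b := by simpa only [RelIso.apply_inv_self] using (congrArg s hinv).symm
  have hfix : ∀ j, (s ^ j) b = b := fun j => by
    induction j with
    | zero => rfl
    | succ j ih => rw [pow_succ, RelIso.mul_apply, hs, ih]
  by_contra hne
  obtain ⟨w, hwb, hw0, hw⟩ := hfree bᶜ fun h => hne (compl_eq_bot.1 h)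
  have hsup : IsWandering s N (a ⊔ w) := ha.prop.sup hw fun j => by
    have hwj : (s ^ j) w ≤ bᶜ := by
      rw [← hfix j, ← map_compl']
      exact (s ^ j).monotone hwb
    have haj : (s ^ j) a ≤ b := ((s ^ j).monotone hab).trans_eq (hfix j)
    exact ⟨disjoint_compl_right.mono hab hwj, disjoint_compl_left.mono hwb haj⟩
  have hwa : w ≤ a := le_sup_right.trans (ha.le_of_ge hsup le_sup_left)
  exact hw0 (disjoint_self.1 (disjoint_compl_right.mono (hwa.trans hab) hwb))

/-- `firstVisit s a j` is the set of points whose first visit to `a` under the point map inducing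
`s⁻¹` on sets happens after exactly `j` steps. -/
def firstVisit (a : B) : ℕ → B :=
  disjointed fun j => (s⁻¹ ^ j) a

theorem apply_firstVisit_succ (a : B) (j : ℕ) :
    s (firstVisit s a (j + 1)) = firstVisit s a j \ s a := by
  have hstep : ∀ i, s ((s⁻¹ ^ (i + 1)) a) = (s⁻¹ ^ i) a := fun i => by
    rw [pow_succ', RelIso.mul_apply, RelIso.apply_inv_self]
  have hsup : s ((Finset.range (j + 1)).sup fun i => (s⁻¹ ^ i) a) =
      ((Finset.range j).sup fun i => (s⁻¹ ^ i) a) ⊔ s a := by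
    rw [Finset.range_add_one', Finset.sup_insert, Finset.sup_map, map_sup, map_finset_sup, sup_comm]
    exact congrArg (· ⊔ s a) (Finset.sup_congr rfl fun i _ => hstep i)
  simp only [firstVisit, disjointed_apply, Nat.Iio_eq_range, map_sdiff', hstep, hsup,
    sdiff_sdiff_left]

theorem pow_apply_firstVisit_add (a : B) (i j : ℕ) :
    (s ^ i) (firstVisit s a (j + i)) =
      firstVisit s a j \ (Finset.range i).sup fun k => (s ^ (k + 1)) a := by
  induction i with
  | zero => simp
  | succ i ih =>
    rw [← add_assoc, pow_succ, RelIso.mul_apply, apply_firstVisit_succ, map_sdiff', ih,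
      ← RelIso.mul_apply, ← pow_succ, sdiff_sdiff_left, Finset.range_add_one, Finset.sup_insert,
      sup_comm]

/-- The points whose first visit to `a` happens after `j` steps for some `j ≡ r` modulo `n`. -/
def firstVisitMod (a : B) (n r : ℕ) : B :=
  ⨆ m : ℕ, firstVisit s a (m * n + r)

theorem disjoint_firstVisitMod (a : B) {n q r : ℕ} (hq : q < n) (hr : r < n) (hqr : q ≠ r) :
    Disjoint (firstVisitMod s a n q) (firstVisitMod s a n r) := by
  simp only [firstVisitMod, iSup_disjoint_iff, disjoint_iSup_iff]
  refine fun k l => disjoint_disjointed _ fun h => hqr ?_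
  simpa only [Nat.mul_add_mod_self_right, Nat.mod_eq_of_lt hq, Nat.mod_eq_of_lt hr] using
    congrArg (· % n) h

-- The base consists of the points whose first visit to `a` happens at a time `≡ n - 1` mod `n`.
theorem exists_rokhlin_tower {n : ℕ} (hn : 0 < n) {a : B}
    (ha : ⨆ j : ℕ, (s⁻¹ ^ j) a = ⊤) :
    ∃ g : B, Pairwise (Disjoint on fun i : Fin n => (s ^ (i : ℕ)) g) ∧
      ⊤ ≤ (Finset.univ.sup fun i : Fin n => (s ^ (i : ℕ)) g) ⊔
        (Finset.range n).sup fun i => (s ^ (i + 1)) a := by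
  refine ⟨firstVisitMod s a n (n - 1), fun i j hij => ?_, ?_⟩
  · have hle : ∀ i : Fin n, (s ^ (i : ℕ)) (firstVisitMod s a n (n - 1)) ≤
        firstVisitMod s a n (n - 1 - i) := fun i => by
      rw [firstVisitMod, OrderIso.map_iSup]
      refine iSup_mono fun m => ?_
      rw [show m * n + (n - 1) = m * n + (n - 1 - i) + i by omega, pow_apply_firstVisit_add]
      exact sdiff_le
    exact (disjoint_firstVisitMod s a (by omega) (by omega) (by omega)).mono (hle i) (hle j)
  · rw [← ha, ← iSup_disjointed]
    refine iSup_le fun j => ?_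
    have hj : j % n < n := Nat.mod_lt j hn
    obtain ⟨i, hi⟩ : ∃ i, i + j % n = n - 1 := ⟨n - 1 - j % n, by omega⟩
    have hg : firstVisit s a (j + i) ≤ firstVisitMod s a n (n - 1) := by
      refine le_iSup_of_le (j / n) (le_of_eq (congrArg _ ?_))
      have := Nat.div_add_mod' j n
      omega
    calc firstVisit s a j ≤ (s ^ i) (firstVisit s a (j + i)) ⊔
          (Finset.range i).sup fun k => (s ^ (k + 1)) a := by
          rw [pow_apply_firstVisit_add]; exact le_sdiff_sup
      _ ≤ _ := sup_le_sup
        (((s ^ i).monotone hg).trans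
          (Finset.le_sup (f := fun i : Fin n => (s ^ (i : ℕ)) _)
            (Finset.mem_univ ⟨i, by omega⟩)))
        (Finset.sup_mono (Finset.range_mono (by omega)))

end Rokhlin

section DisjointElements

variable {G ι : Type*} [Lattice G] [AddCommGroup G]

theorem inf_eq_zero_mono {a b c d : G} (hc : 0 ≤ c) (hd : 0 ≤ d) (hca : c ≤ a) (hdb : d ≤ b)
    (h : a ⊓ b = 0) : c ⊓ d = 0 :=
  le_antisymm ((inf_le_inf hca hdb).trans_eq h) (le_inf hc hd)

variable [IsOrderedAddMonoid G] {a b c : G}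

theorem add_inf_eq_zero (ha : a ⊓ c = 0) (hb : b ⊓ c = 0) : (a + b) ⊓ c = 0 := by
  have ha0 : 0 ≤ a := ha ▸ inf_le_left
  have hb0 : 0 ≤ b := hb ▸ inf_le_left
  have hc0 : 0 ≤ c := hb ▸ inf_le_right
  have hle : (a + b) ⊓ c ≤ b := by
    calc (a + b) ⊓ c ≤ (a + b) ⊓ (c + b) := inf_le_inf_left _ (le_add_of_nonneg_right hb0)
      _ = b := by rw [← inf_add, ha, zero_add]
  exact le_antisymm ((le_inf hle inf_le_right).trans_eq hb) (le_inf (add_nonneg ha0 hb0) hc0)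

theorem sum_inf_eq_zero {t : Finset ι} {x : ι → G} (hc : 0 ≤ c) (h : ∀ i ∈ t, x i ⊓ c = 0) :
    (∑ i ∈ t, x i) ⊓ c = 0 :=
  Finset.sum_induction x (· ⊓ c = 0) (fun _ _ => add_inf_eq_zero) (inf_eq_left.2 hc) h

theorem nsmul_inf_eq_zero (h : a ⊓ c = 0) (m : ℕ) : (m • a) ⊓ c = 0 := by
  rw [← Finset.card_range m, ← Finset.sum_const]
  exact sum_inf_eq_zero (h ▸ inf_le_right) fun _ _ => h

theorem add_eq_sup_of_inf_eq_zero (h : a ⊓ b = 0) : a + b = a ⊔ b := by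
  rw [← inf_add_sup, h, zero_add]

theorem isLUB_inf_eq_zero {D : Set G} (hD : D.Nonempty) (ha : IsLUB D a)
    (h : ∀ d ∈ D, d ⊓ c = 0) : a ⊓ c = 0 := by
  obtain ⟨d, hd⟩ := hD
  have hd0 : 0 ≤ d := h d hd ▸ inf_le_left
  have hc : 0 ≤ c := h d hd ▸ inf_le_right
  have hle : a ≤ a ⊔ c - c := ha.2 fun d hd => by
    rw [le_sub_iff_add_le, add_eq_sup_of_inf_eq_zero (h d hd)]
    exact sup_le_sup_right (ha.1 hd) c
  rw [le_sub_iff_add_le, ← inf_add_sup, add_le_iff_nonpos_left] at hle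
  exact le_antisymm hle (le_inf (hd0.trans (ha.1 hd)) hc)

theorem sum_le_of_pairwise_inf_eq_zero {t : Finset ι} {x : ι → G} (hb : 0 ≤ b)
    (hx : ∀ i ∈ t, 0 ≤ x i) (hxb : ∀ i ∈ t, x i ≤ b)
    (hd : (t : Set ι).Pairwise fun i j => x i ⊓ x j = 0) : ∑ i ∈ t, x i ≤ b := by
  classical
  induction t using Finset.induction_on with
  | empty => simpa only [Finset.sum_empty] using hb
  | insert i t hi ih =>
    simp only [Finset.forall_mem_insert] at hx hxb
    rw [Finset.coe_insert, Set.pairwise_insert_of_notMem (by simpa only [Finset.mem_coe])] at hd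
    have hdisj : (∑ j ∈ t, x j) ⊓ x i = 0 := sum_inf_eq_zero hx.1 fun j hj => (hd.2 j hj).2
    rw [Finset.sum_insert hi, add_comm, add_eq_sup_of_inf_eq_zero hdisj]
    exact sup_le (ih hx.2 hxb.2 hd.1) hxb.1

end DisjointElements

section Components

section Lattice

variable [Lattice E] [AddCommGroup E] [IsOrderedAddMonoid E] {e p q c : E}

theorem isComponent_iff_inf_sub_eq_zero : IsComponent e p ↔ p ⊓ (e - p) = 0 := by
  refine ⟨fun h => (inf_comm _ _).trans h.2.2, fun h => ⟨h ▸ inf_le_left, ?_, ?_⟩⟩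
  · exact sub_nonneg.1 (h ▸ inf_le_right)
  · rwa [inf_comm]

theorem isComponent_zero (he : 0 ≤ e) : IsComponent e 0 :=
  isComponent_iff_inf_sub_eq_zero.2 (by rwa [sub_zero, inf_eq_left])

namespace IsComponent

theorem compl (h : IsComponent e p) : IsComponent e (e - p) :=
  isComponent_iff_inf_sub_eq_zero.2 (by simpa only [sub_sub_cancel] using h.2.2)

theorem trans (hc : IsComponent e c) (hp : IsComponent c p) : IsComponent e p := by
  have hdisj : (e - c) ⊓ p = 0 :=
    inf_eq_zero_mono (sub_nonneg.2 hc.2.1) hp.1 le_rfl hp.2.1 hc.2.2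
  refine ⟨hp.1, hp.2.1.trans hc.2.1, ?_⟩
  simpa only [sub_add_sub_cancel] using add_inf_eq_zero hdisj hp.2.2

theorem of_isLUB {D : Set E} (hD : D.Nonempty) (hp : IsLUB D p) (h : ∀ d ∈ D, IsComponent e d) :
    IsComponent e p := by
  have hpe : p ≤ e := hp.2 fun d hd => (h d hd).2.1
  refine isComponent_iff_inf_sub_eq_zero.2 (isLUB_inf_eq_zero hD hp fun d hd => ?_)
  exact inf_eq_zero_mono (h d hd).1 (sub_nonneg.2 hpe) le_rfl (sub_le_sub_left (hp.1 hd) e)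
    (isComponent_iff_inf_sub_eq_zero.1 (h d hd))

theorem sup (hp : IsComponent e p) (hq : IsComponent e q) : IsComponent e (p ⊔ q) :=
  of_isLUB (Set.insert_nonempty p {q}) isLUB_pair (by rintro _ (rfl | rfl) <;> assumption)

theorem inf (hp : IsComponent e p) (hq : IsComponent e q) : IsComponent e (p ⊓ q) := by
  simpa only [← sub_inf, sub_sub_cancel] using (hp.compl.sup hq.compl).compl

end IsComponent

/-- The components of `e`; they form a Boolean algebra, which is complete if the lattice-ordered
group is Dedekind complete. These instances take `0 ≤ e` as a `Fact`. -/
def Component (e : E) : Type _ :=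
  {p : E // IsComponent e p}

namespace Component

instance : Lattice (Component e) :=
  Subtype.lattice (P := IsComponent e) (fun _ _ => .sup) (fun _ _ => .inf)

variable [Fact (0 ≤ e)]

instance : BooleanAlgebra (Component e) where
  le_sup_inf p q r := by
    let := AddCommGroup.toDistribLattice E
    exact le_sup_inf (x := p.1) (y := q.1) (z := r.1)
  top := ⟨e, by simpa only [sub_zero] using (isComponent_zero (Fact.out : 0 ≤ e)).compl⟩
  bot := ⟨0, isComponent_zero Fact.out⟩
  compl p := ⟨e - p.1, p.2.compl⟩
  le_top p := p.2.2.1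
  bot_le p := p.2.1
  inf_compl_le_bot p := (isComponent_iff_inf_sub_eq_zero.1 p.2).le
  top_le_sup_compl p := by
    have h := add_eq_sup_of_inf_eq_zero (isComponent_iff_inf_sub_eq_zero.1 p.2)
    exact ((add_sub_cancel p.1 e).symm.trans h).le

theorem disjoint_iff_inf_eq_zero {p q : Component e} : Disjoint p q ↔ p.1 ⊓ q.1 = 0 :=
  disjoint_iff.trans Subtype.ext_iff

theorem coe_sup_le_sum {ι : Type*} (t : Finset ι) (p : ι → Component e) :
    (t.sup p).1 ≤ ∑ i ∈ t, (p i).1 := by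
  classical
  induction t using Finset.induction_on with
  | empty => exact le_rfl
  | insert i t hi ih =>
    rw [Finset.sup_insert, Finset.sum_insert hi]
    refine sup_le (le_add_of_nonneg_right (Finset.sum_nonneg fun j _ => (p j).2.1)) ?_
    exact ih.trans (le_add_of_nonneg_left (p i).2.1)

theorem le_sum_add_sum_of_top_le_sup {ι κ : Type*} {t : Finset ι} {u : Finset κ}
    {p : ι → Component e} {q : κ → Component e} (h : ⊤ ≤ t.sup p ⊔ u.sup q) :
    e ≤ ∑ i ∈ t, (p i).1 + ∑ k ∈ u, (q k).1 := by
  have hp := Finset.sum_nonneg fun i (_ : i ∈ t) => (p i).2.1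
  have hq := Finset.sum_nonneg fun k (_ : k ∈ u) => (q k).2.1
  calc e ≤ (t.sup p).1 ⊔ (u.sup q).1 := h
    _ ≤ ∑ i ∈ t, (p i).1 + ∑ k ∈ u, (q k).1 :=
      sup_le ((coe_sup_le_sum t p).trans (le_add_of_nonneg_right hq))
        ((coe_sup_le_sum u q).trans (le_add_of_nonneg_left hp))

end Component

end Lattice

theorem isLUB_csSup_insert_zero [ConditionallyCompleteLattice E] [Zero E] {e : E}
    (he : 0 ≤ e) {D : Set E} (hD : ∀ p ∈ D, p ≤ e) : IsLUB (insert 0 D) (sSup (insert 0 D)) :=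
  isLUB_csSup (Set.insert_nonempty 0 D) ⟨e, Set.forall_mem_insert.2 ⟨he, hD⟩⟩

namespace Component

variable [ConditionallyCompleteLattice E] [AddCommGroup E] [IsOrderedAddMonoid E]
  {e : E} [Fact (0 ≤ e)]

instance : SupSet (Component e) where
  sSup D := ⟨sSup (insert 0 (Subtype.val '' D)),
    .of_isLUB (Set.insert_nonempty _ _)
      (isLUB_csSup_insert_zero Fact.out (Set.forall_mem_image.2 fun p _ => p.2.2.1))
      (Set.forall_mem_insert.2 ⟨isComponent_zero Fact.out, Set.forall_mem_image.2 fun p _ => p.2⟩)⟩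

theorem isLUB_sSup (D : Set (Component e)) : IsLUB D (sSup D) := by
  have h : IsLUB (insert 0 (Subtype.val '' D)) (sSup D).1 :=
    isLUB_csSup_insert_zero Fact.out (Set.forall_mem_image.2 fun p _ => p.2.2.1)
  exact ⟨fun p hp => h.1 (.inr ⟨p, hp, rfl⟩), fun q hq =>
    h.2 (Set.forall_mem_insert.2 ⟨q.2.1, Set.forall_mem_image.2 fun _ hp => hq hp⟩)⟩

instance : CompleteBooleanAlgebra (Component e) where
  __ := (inferInstance : BooleanAlgebra (Component e))
  __ := completeLatticeOfSup (Component e) isLUB_sSup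

end Component

end Components

theorem surjInv_coe_linearEquiv {R M : Type*} [Semiring R] [AddCommMonoid M] [Module R M]
    (s : M ≃ₗ[R] M) (hs : Surjective ⇑(s : M →ₗ[R] M)) :
    surjInv hs = ⇑s⁻¹ := by
  funext f
  exact s.injective ((surjInv_eq hs f).trans (s.apply_symm_apply f).symm)

section Automorphisms

variable [Lattice E] [AddCommGroup E] [Module ℝ E] {e : E}

/-- The group of Riesz space automorphisms (linear order isomorphisms) fixing `e`. -/
def rieszAut (e : E) : Subgroup (E ≃ₗ[ℝ] E) where
  carrier := {s | (∀ x y, s x ≤ s y ↔ x ≤ y) ∧ s e = e}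
  one_mem' := ⟨fun _ _ => Iff.rfl, rfl⟩
  mul_mem' {s t} hs ht := ⟨fun x y => (hs.1 _ _).trans (ht.1 x y), (congrArg s ht.2).trans hs.2⟩
  inv_mem' {s} hs := by
    refine ⟨fun x y => ?_, s.symm_apply_eq.2 hs.2.symm⟩
    have h := hs.1 (s.symm x) (s.symm y)
    rw [s.apply_symm_apply, s.apply_symm_apply] at h
    exact h.symm

/-- The automorphisms in `rieszAut e` that preserve `T`. For a conditional expectation preserving
system `(E, T, S, e)` these are exactly the bijective `S'` for which `(E, T, S', e)` is again
one. -/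
def cepsAut (T : E →ₗ[ℝ] E) (e : E) : Subgroup (E ≃ₗ[ℝ] E) where
  carrier := {s | s ∈ rieszAut e ∧ ∀ f, T (s f) = T f}
  one_mem' := ⟨one_mem _, fun _ => rfl⟩
  mul_mem' hs ht := ⟨mul_mem hs.1 ht.1, fun f => (hs.2 _).trans (ht.2 f)⟩
  inv_mem' {s} hs := ⟨inv_mem hs.1, fun f =>
    (hs.2 (s.symm f)).symm.trans (congrArg T (s.apply_symm_apply f))⟩

theorem mem_rieszAut_of_nonneg [IsOrderedAddMonoid E] {s : E ≃ₗ[ℝ] E} (hs : ∀ f, 0 ≤ f → 0 ≤ s f)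
    (hs' : ∀ f, 0 ≤ f → 0 ≤ s⁻¹ f) (he : s e = e) : s ∈ rieszAut e := by
  refine ⟨fun x y => ⟨fun h => ?_, fun h => ?_⟩, he⟩
  · have h' := hs' _ (sub_nonneg.2 h)
    rwa [← map_sub, ← LinearEquiv.mul_apply, inv_mul_cancel, LinearEquiv.coe_one, id_eq,
      sub_nonneg] at h'
  · simpa only [map_sub, sub_nonneg] using hs _ (sub_nonneg.2 h)

namespace rieszAut

variable {s : E ≃ₗ[ℝ] E} (hs : s ∈ rieszAut e)
include hs

/-- An element of `rieszAut e` as an order isomorphism. -/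
def toOrderIso : E ≃o E :=
  ⟨s.toEquiv, hs.1 _ _⟩

theorem map_sup (x y : E) : s (x ⊔ y) = s x ⊔ s y :=
  (toOrderIso hs).map_sup x y

theorem map_inf (x y : E) : s (x ⊓ y) = s x ⊓ s y :=
  (toOrderIso hs).map_inf x y

theorem map_abs (x : E) : s |x| = |s x| := by
  rw [abs, map_sup hs, map_neg, abs]

theorem map_nonneg {x : E} (hx : 0 ≤ x) : 0 ≤ s x := by
  simpa only [map_zero] using (hs.1 0 x).2 hx

theorem isComponent_map {p : E} (hp : IsComponent e p) : IsComponent e (s p) := by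
  refine ⟨map_nonneg hs hp.1, ((hs.1 p e).2 hp.2.1).trans_eq hs.2, ?_⟩
  nth_rewrite 1 [← hs.2]
  rw [← map_sub, ← map_inf hs, hp.2.2, map_zero]

end rieszAut

/-- The action of Riesz space automorphisms fixing `e` on the Boolean algebra of components. -/
def componentAut [IsOrderedAddMonoid E] : rieszAut e →* (Component e ≃o Component e) where
  toFun s :=
    { toFun p := ⟨s.1 p.1, rieszAut.isComponent_map s.2 p.2⟩
      invFun p := ⟨s⁻¹.1 p.1, rieszAut.isComponent_map s⁻¹.2 p.2⟩
      left_inv p := Subtype.ext (s.1.symm_apply_apply p.1)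
      right_inv p := Subtype.ext (s.1.apply_symm_apply p.1)
      map_rel_iff' {p q} := s.2.1 p.1 q.1 }
  map_one' := rfl
  map_mul' _ _ := rfl

theorem coe_componentAut_pow_apply [IsOrderedAddMonoid E] (s : rieszAut e) (k : ℕ)
    (p : Component e) : ((componentAut s ^ k) p).1 = (s.1 ^ k) p.1 := by
  rw [← map_pow]
  rfl

end Automorphisms

namespace IsCEPS

variable [ConditionallyCompleteLattice E] [AddCommGroup E] [Module ℝ E]
  {T S : E →ₗ[ℝ] E} {e : E}

theorem mem_cepsAut {s : E ≃ₗ[ℝ] E} (h : IsCEPS T s e) : s ∈ cepsAut T e := by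
  refine ⟨⟨fun x y => ?_, h.Se⟩, h.TS⟩
  rw [← sup_eq_right, ← sup_eq_right (b := y), ← s.injective.eq_iff (a := x ⊔ y)]
  exact (Eq.congr_left (h.S_hom x y)).symm

theorem of_mem_cepsAut (h : IsCEPS T S e) {t : E ≃ₗ[ℝ] E} (ht : t ∈ cepsAut T e) :
    IsCEPS T t e :=
  { h with
    S_hom := rieszAut.map_sup ht.1
    S_ordCont := fun D _ _ hD => by
      have himage := (rieszAut.toOrderIso ht.1).isGLB_image'.2 hD
      rwa [show rieszAut.toOrderIso ht.1 0 = 0 from map_zero t] at himage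
    Se := ht.1.2
    TS := ht.2 }

variable [IsOrderedAddMonoid E]

theorem T_mono (h : IsCEPS T S e) : Monotone T := fun x y hxy => by
  simpa only [map_sub, sub_nonneg] using h.T_pos _ (sub_nonneg.2 hxy)

theorem injective (h : IsCEPS T S e) : Injective S := by
  refine (injective_iff_map_eq_zero S).2 fun f hf => ?_
  have hS : S |f| = 0 := by rw [abs, h.S_hom, map_neg, hf, neg_zero, sup_idem]
  have habs : |f| = 0 := h.T_strictPos _ (abs_nonneg f) (by rw [← h.TS, hS, map_zero])
  exact le_antisymm (habs ▸ le_abs_self f) (neg_nonpos.1 (habs ▸ neg_le_abs f))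

end IsCEPS

section QComp

section Lattice

variable [Lattice E]

theorem le_partialSup [Zero E] (f : ℕ → E) {i n : ℕ} (h : i < n) : f i ≤ partialSup f n := by
  induction n with
  | zero => exact absurd h i.not_lt_zero
  | succ n ih =>
    rcases Nat.lt_succ_iff_lt_or_eq.1 h with h | rfl
    · exact (ih h).trans le_sup_left
    · exact le_sup_right

variable [AddCommGroup E] [IsOrderedAddMonoid E] {e : E}

theorem isComponent_partialSup {f : ℕ → E} (he : 0 ≤ e) (hf : ∀ i, IsComponent e (f i)) (n : ℕ) :
    IsComponent e (partialSup f n) := by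
  induction n with
  | zero => exact isComponent_zero he
  | succ n ih => exact ih.sup (hf n)

theorem qComp_le_sub_iterate (f : E → E) (u : E) {j k : ℕ} (hj : 0 < j) (hjk : j < k) :
    qComp f e u k ≤ e - f^[j] u := by
  have hle := le_partialSup (fun i => f^[i + 1] u) (show j - 1 < k - 1 by omega)
  rw [Nat.sub_add_cancel hj] at hle
  exact inf_le_right.trans (sub_le_sub_left hle e)

end Lattice

variable [Lattice E] [AddCommGroup E] [IsOrderedAddMonoid E] [Module ℝ E]
  {e u : E} {s : E ≃ₗ[ℝ] E}

theorem isComponent_qComp (hs : s ∈ rieszAut e) (hu : IsComponent e u) (k : ℕ) :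
    IsComponent e (qComp s e u k) := by
  have hiter : ∀ j, IsComponent e (s^[j] u) := fun j => by
    rw [← LinearEquiv.coe_pow]
    exact rieszAut.isComponent_map (pow_mem hs j) hu
  have hsup := isComponent_partialSup (hu.1.trans hu.2.1) (fun i => hiter (i + 1)) (k - 1)
  exact (hu.inf (hiter k)).inf hsup.compl

theorem qComp_inf_pow_apply_qComp (hs : s ∈ rieszAut e) (hu : IsComponent e u) {j k : ℕ}
    (hj : 0 < j) (hjk : j < k) : qComp s e u k ⊓ (s ^ j) (qComp s e u k) = 0 := by
  have hsj := pow_mem hs j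
  have hq := isComponent_qComp hs hu k
  have hqu : qComp s e u k ≤ u := inf_le_left.trans inf_le_left
  refine inf_eq_zero_mono hq.1 (rieszAut.map_nonneg hsj hq.1) (qComp_le_sub_iterate s u hj hjk)
    ((hsj.1 _ _).2 hqu) ?_
  rw [← LinearEquiv.coe_pow]
  exact (rieszAut.isComponent_map hsj hu).2.2

theorem isPeriodic_of_pow_eq_one (hs : s ∈ rieszAut e) {n : ℕ} (hn : 0 < n) (hsn : s ^ n = 1) :
    IsPeriodic s e := by
  refine ⟨n + 1, fun c hc _ _ k hk => ?_⟩
  have hle : qComp s e c k ≤ e - c := by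
    simpa only [← LinearEquiv.coe_pow, hsn, LinearEquiv.coe_one, id_eq] using
      qComp_le_sub_iterate s c hn (show n < k from hk)
  have hq := isComponent_qComp hs hc k
  refine le_antisymm ?_ hq.1
  exact (le_inf hle (inf_le_left.trans inf_le_left)).trans_eq hc.2.2

end QComp

section BandProjections

section BandProjApp

variable [ConditionallyCompleteLattice E] [AddCommGroup E] {f g q : E}

theorem isLUB_bandProjApp (g f : E) : IsLUB (range fun m : ℕ => f ⊓ m • g) (bandProjApp g f) :=
  isLUB_ciSup ⟨f, forall_mem_range.2 fun _ => inf_le_left⟩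

theorem bandProjApp_le (g f : E) : bandProjApp g f ≤ f :=
  (isLUB_bandProjApp g f).2 (forall_mem_range.2 fun _ => inf_le_left)

theorem bandProjApp_nonneg (hf : 0 ≤ f) : 0 ≤ bandProjApp g f :=
  (isLUB_bandProjApp g f).1 ⟨0, by simp only [zero_nsmul, inf_eq_right.2 hf]⟩

variable [IsOrderedAddMonoid E]

theorem bandProjApp_inf_eq_zero (hf : 0 ≤ f) (h : g ⊓ q = 0) : bandProjApp g f ⊓ q = 0 := by
  have hg : 0 ≤ g := h ▸ inf_le_left
  refine isLUB_inf_eq_zero (range_nonempty _) (isLUB_bandProjApp g f) ?_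
  refine forall_mem_range.2 fun m => ?_
  exact inf_eq_zero_mono (le_inf hf (nsmul_nonneg hg m)) (h ▸ inf_le_right) inf_le_right le_rfl
    (nsmul_inf_eq_zero h m)

theorem sub_bandProjApp_inf_eq_zero (hg : 0 ≤ g) : (f - bandProjApp g f) ⊓ g = 0 := by
  set a := bandProjApp g f
  have hle : a ≤ a - (f - a) ⊓ g := (isLUB_bandProjApp g f).2 <| forall_mem_range.2 fun m => by
    rw [le_sub_iff_add_le]
    have hm : f ⊓ m • g ≤ a := (isLUB_bandProjApp g f).1 ⟨m, rfl⟩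
    refine (le_inf ?_ ?_).trans ((isLUB_bandProjApp g f).1 ⟨m + 1, rfl⟩)
    · exact (add_le_add hm inf_le_left).trans_eq (add_sub_cancel a f)
    · exact (add_le_add inf_le_right inf_le_right).trans_eq (succ_nsmul g m).symm
  exact le_antisymm (le_sub_self_iff a |>.1 hle) (le_inf (sub_nonneg.2 (bandProjApp_le g f)) hg)

end BandProjApp

section DisjointComplement

variable [Lattice E] [AddCommGroup E]

theorem abs_smul_le_smul_abs [Module ℝ E] [PosSMulMono ℝ E] (c : ℝ) (x : E) :
    |c • x| ≤ |c| • |x| := by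
  wlog hc : 0 ≤ c generalizing c
  · simpa only [neg_smul, abs_neg] using this (-c) (neg_nonneg.2 (le_of_not_ge hc))
  · rw [abs_of_nonneg hc]
    refine abs_le'.2 ⟨smul_le_smul_of_nonneg_left (le_abs_self x) hc, ?_⟩
    rw [← smul_neg]
    exact smul_le_smul_of_nonneg_left (neg_le_abs x) hc

variable [IsOrderedAddMonoid E]

theorem WeakOrderUnit.inf_eq_zero_of_inf_sub_eq_zero {e p q x y : E} (he : WeakOrderUnit e)
    (hp : p ≤ e) (hq : q ≤ e) (hpq : p ⊓ q = 0) (hx : x ⊓ (e - p) = 0) (hy : y ⊓ (e - q) = 0) :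
    x ⊓ y = 0 := by
  have hxy : 0 ≤ x ⊓ y := le_inf (hx ▸ inf_le_left) (hy ▸ inf_le_left)
  have hcover : e ≤ (e - p) + (e - q) := by
    have hle : p + q ≤ e := (add_eq_sup_of_inf_eq_zero hpq).trans_le (sup_le hp hq)
    calc e ≤ e - p + p + (e - (p + q)) := by
          simpa only [sub_add_cancel, le_add_iff_nonneg_right, sub_nonneg] using hle
      _ = (e - p) + (e - q) := by abel
  refine he.2 _ (inf_eq_zero_mono he.1.le (abs_nonneg _) hcover (abs_of_nonneg hxy).le ?_)
  refine add_inf_eq_zero (inf_eq_zero_mono ?_ hxy le_rfl inf_le_left ((inf_comm _ _).trans hx))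
    (inf_eq_zero_mono ?_ hxy le_rfl inf_le_right ((inf_comm _ _).trans hy))
  exacts [sub_nonneg.2 hp, sub_nonneg.2 hq]

variable [Module ℝ E] [PosSMulMono ℝ E]

/-- The disjoint complement `{x | |x| ⊓ |q| = 0}` of an element `q`, as a linear subspace. -/
def disjointComplement (q : E) : Submodule ℝ E where
  carrier := {x | |x| ⊓ |q| = 0}
  zero_mem' := (congrArg (· ⊓ |q|) abs_zero).trans (inf_eq_left.2 (abs_nonneg q))
  add_mem' {x y} hx hy := inf_eq_zero_mono (abs_nonneg _) (abs_nonneg q) (abs_add_le x y) le_rfl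
    (add_inf_eq_zero hx hy)
  smul_mem' c x hx := by
    obtain ⟨m, hm⟩ := exists_nat_ge |c|
    have hle : |c • x| ≤ m • |x| := by
      rw [← Nat.cast_smul_eq_nsmul ℝ]
      exact (abs_smul_le_smul_abs c x).trans (smul_le_smul_of_nonneg_right hm (abs_nonneg x))
    exact inf_eq_zero_mono (abs_nonneg _) (abs_nonneg q) hle le_rfl (nsmul_inf_eq_zero hx m)

theorem mem_disjointComplement_of_nonneg {q x : E} (hq : 0 ≤ q) :
    x ∈ disjointComplement q ↔ |x| ⊓ q = 0 :=
  iff_of_eq (congrArg (|x| ⊓ · = 0) (abs_of_nonneg hq))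

end DisjointComplement

variable [ConditionallyCompleteLattice E] [AddCommGroup E] [IsOrderedAddMonoid E]
  [Module ℝ E] [PosSMulMono ℝ E] {e p f : E}

theorem bandProjApp_mem_disjointComplement (hp : IsComponent e p) (hf : 0 ≤ f) :
    bandProjApp p f ∈ disjointComplement (e - p) := by
  rw [mem_disjointComplement_of_nonneg (sub_nonneg.2 hp.2.1), abs_of_nonneg (bandProjApp_nonneg hf)]
  exact bandProjApp_inf_eq_zero hf (isComponent_iff_inf_sub_eq_zero.1 hp)

theorem sub_bandProjApp_mem_disjointComplement (hp : 0 ≤ p) :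
    f - bandProjApp p f ∈ disjointComplement p := by
  rw [mem_disjointComplement_of_nonneg hp, abs_of_nonneg (sub_nonneg.2 (bandProjApp_le p f))]
  exact sub_bandProjApp_inf_eq_zero hp

theorem isCompl_disjointComplement (he : WeakOrderUnit e) (hp : IsComponent e p) :
    IsCompl (disjointComplement (e - p)) (disjointComplement p) := by
  refine ⟨Submodule.disjoint_def.2 fun x hx hx' => ?_, codisjoint_iff.2 (eq_top_iff.2 ?_)⟩
  · rw [mem_disjointComplement_of_nonneg (sub_nonneg.2 hp.2.1), inf_comm] at hx
    rw [mem_disjointComplement_of_nonneg hp.1, inf_comm] at hx'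
    refine he.2 x ?_
    rw [← sub_add_cancel e p]
    exact add_inf_eq_zero hx hx'
  · have hpos : ∀ f : E, 0 ≤ f → f ∈ disjointComplement (e - p) ⊔ disjointComplement p :=
      fun f hf => by
        rw [← add_sub_cancel (bandProjApp p f) f]
        exact Submodule.add_mem_sup (bandProjApp_mem_disjointComplement hp hf)
          (sub_bandProjApp_mem_disjointComplement hp.1)
    intro f _
    rw [← posPart_sub_negPart f]
    exact sub_mem (hpos _ (posPart_nonneg f)) (hpos _ (negPart_nonneg f))

/-- The linear projection onto the band generated by a component `p` of the weak order unit `e`;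
that band is the disjoint complement of `e - p`. It extends `bandProjApp p` to all of `E`. -/
def bandProj (he : WeakOrderUnit e) (hp : IsComponent e p) : E →ₗ[ℝ] E :=
  (disjointComplement (e - p)).projection (disjointComplement p) (isCompl_disjointComplement he hp)

variable (he : WeakOrderUnit e) (hp : IsComponent e p)

theorem bandProj_eq_bandProjApp (hf : 0 ≤ f) : bandProj he hp f = bandProjApp p f := by
  have hsub := Submodule.projection_apply_of_mem_right (isCompl_disjointComplement he hp)
    (sub_bandProjApp_mem_disjointComplement (f := f) hp.1)
  rw [map_sub, sub_eq_zero] at hsub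
  exact hsub.trans (Submodule.projection_apply_of_mem_left _
    (bandProjApp_mem_disjointComplement hp hf))

theorem bandProj_nonneg (hf : 0 ≤ f) : 0 ≤ bandProj he hp f := by
  rw [bandProj_eq_bandProjApp he hp hf]
  exact bandProjApp_nonneg hf

theorem bandProj_le (hf : 0 ≤ f) : bandProj he hp f ≤ f := by
  rw [bandProj_eq_bandProjApp he hp hf]
  exact bandProjApp_le p f

theorem abs_bandProj_inf_sub (f : E) : |bandProj he hp f| ⊓ (e - p) = 0 :=
  (mem_disjointComplement_of_nonneg (sub_nonneg.2 hp.2.1)).1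
    (Submodule.projection_apply_mem _ f)

theorem bandProj_bandProj (f : E) : bandProj he hp (bandProj he hp f) = bandProj he hp f :=
  Submodule.projection_apply_of_mem_left _ (Submodule.projection_apply_mem _ f)

theorem bandProj_eq_zero (hf : |f| ⊓ p = 0) : bandProj he hp f = 0 :=
  Submodule.projection_apply_of_mem_right _ ((mem_disjointComplement_of_nonneg hp.1).2 hf)

theorem bandProj_unit : bandProj he hp e = p := by
  have hmem : p ∈ disjointComplement (e - p) :=
    (mem_disjointComplement_of_nonneg (sub_nonneg.2 hp.2.1)).2 <| by
      rw [abs_of_nonneg hp.1, isComponent_iff_inf_sub_eq_zero.1 hp]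
  have hcompl : bandProj he hp (e - p) = 0 :=
    bandProj_eq_zero he hp (by rw [abs_of_nonneg (sub_nonneg.2 hp.2.1), hp.2.2])
  rw [map_sub, sub_eq_zero] at hcompl
  exact hcompl.trans (Submodule.projection_apply_of_mem_left _ hmem)

end BandProjections

section MatrixUnits

variable {R ι : Type*} [Ring R]

/-- A system of matrix units in a ring: `u i j` multiply like the elementary matrices, but their
diagonal sum need not be `1`. -/
structure IsMatrixUnits (u : ι → ι → R) : Prop where
  mul_same : ∀ i j k, u i j * u j k = u i k
  mul_ne : ∀ i {j k} l, j ≠ k → u i j * u k l = 0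

namespace IsMatrixUnits

variable [Fintype ι] {u : ι → ι → R} (hu : IsMatrixUnits u)
include hu

theorem sum_perm_mul (σ : Equiv.Perm ι) (i j : ι) : (∑ k, u (σ k) k) * u i j = u (σ i) j := by
  rw [Finset.sum_mul, Fintype.sum_eq_single i fun k hk => hu.mul_ne _ _ hk, hu.mul_same]

theorem sum_diag_mul (i j : ι) : (∑ k, u k k) * u i j = u i j :=
  hu.sum_perm_mul 1 i j

theorem mul_sum_diag (i j : ι) : u i j * ∑ k, u k k = u i j := by
  rw [Finset.mul_sum, Fintype.sum_eq_single j fun k hk => hu.mul_ne _ _ hk.symm, hu.mul_same]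

/-- The embedding of permutation matrices given by a system of matrix units: `σ` acts as the
permutation matrix of `σ` on the corner of `∑ i, u i i` and as the identity on the complement. -/
def permHom : Equiv.Perm ι →* R where
  toFun σ := ∑ i, u (σ i) i + (1 - ∑ i, u i i)
  map_one' := add_sub_cancel _ 1
  map_mul' σ τ := by
    have hdiag : (∑ i, u i i) * ∑ i, u i i = ∑ i, u i i := by
      simp only [Finset.mul_sum (s := .univ), hu.sum_diag_mul]
    have hσ : (∑ i, u (σ i) i) * ∑ i, u i i = ∑ i, u (σ i) i := by
      simp only [Finset.sum_mul (s := .univ), hu.mul_sum_diag]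
    have hτ : (∑ i, u i i) * ∑ i, u (τ i) i = ∑ i, u (τ i) i := by
      simp only [Finset.mul_sum (s := .univ), hu.sum_diag_mul]
    have hστ : (∑ i, u (σ i) i) * ∑ i, u (τ i) i = ∑ i, u ((σ * τ) i) i := by
      simp only [Finset.mul_sum (s := .univ), hu.sum_perm_mul, Equiv.Perm.mul_apply]
    simp only [add_mul, mul_add, mul_sub, sub_mul, mul_one, one_mul, hdiag, hσ, hτ, hστ]
    abel

end IsMatrixUnits

end MatrixUnits

/-- A tower in a Riesz space with weak order unit `e`: a component `base` of `e` together with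
automorphisms `shift i` moving it to pairwise disjoint levels. -/
structure Tower [Lattice E] [AddCommGroup E] [Module ℝ E] (e : E) (ι : Type*) where
  unit : WeakOrderUnit e
  base : E
  isComponent_base : IsComponent e base
  shift : ι → E ≃ₗ[ℝ] E
  shift_mem : ∀ i, shift i ∈ rieszAut e
  pairwise_disjoint : Pairwise fun i j => shift i base ⊓ shift j base = 0

namespace Tower

variable {ι : Type*}

section Level

variable [Lattice E] [AddCommGroup E] [Module ℝ E] {e : E} (t : Tower e ι)

/-- The `i`-th level of a tower. -/
def level (i : ι) : E :=
  t.shift i t.base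

theorem isComponent_level (i : ι) : IsComponent e (t.level i) :=
  rieszAut.isComponent_map (t.shift_mem i) t.isComponent_base

theorem inv_shift_level (i : ι) : (t.shift i)⁻¹ (t.level i) = t.base :=
  (t.shift i).symm_apply_apply t.base

theorem level_inf_level {i j : ι} (hij : i ≠ j) : t.level i ⊓ t.level j = 0 :=
  t.pairwise_disjoint hij

theorem level_le_sub_level [IsOrderedAddMonoid E] {i j : ι} (hij : i ≠ j) :
    t.level i ≤ e - t.level j := by
  rw [le_sub_iff_add_le, add_eq_sup_of_inf_eq_zero (t.level_inf_level hij)]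
  exact sup_le (t.isComponent_level i).2.1 (t.isComponent_level j).2.1

/-- The part of `e` outside all levels of the tower. -/
def rest [Fintype ι] : E :=
  e - ∑ i, t.level i

end Level

variable [ConditionallyCompleteLattice E] [AddCommGroup E] [IsOrderedAddMonoid E]
  [Module ℝ E] [PosSMulMono ℝ E] {e f : E} (t : Tower e ι)

/-- The operator cutting down to level `j` and moving that level to level `i`. -/
def matrixUnit (i j : ι) : Module.End ℝ E :=
  t.shift i ∘ₗ bandProj t.unit t.isComponent_base ∘ₗ
    ((t.shift j)⁻¹ : E ≃ₗ[ℝ] E)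

theorem matrixUnit_apply (i j : ι) (f : E) :
    t.matrixUnit i j f = t.shift i (bandProj t.unit t.isComponent_base ((t.shift j)⁻¹ f)) :=
  rfl

theorem matrixUnit_nonneg (i j : ι) (hf : 0 ≤ f) : 0 ≤ t.matrixUnit i j f :=
  rieszAut.map_nonneg (t.shift_mem i) <| bandProj_nonneg t.unit t.isComponent_base <|
    rieszAut.map_nonneg (inv_mem (t.shift_mem j)) hf

theorem matrixUnit_self_le (i : ι) (hf : 0 ≤ f) : t.matrixUnit i i f ≤ f :=
  (((t.shift_mem i).1 _ _).2 <| bandProj_le t.unit t.isComponent_base <|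
    rieszAut.map_nonneg (inv_mem (t.shift_mem i)) hf).trans_eq ((t.shift i).apply_symm_apply f)

theorem matrixUnit_unit (i j : ι) : t.matrixUnit i j e = t.level i := by
  rw [matrixUnit_apply, (inv_mem (t.shift_mem j)).2, bandProj_unit, level]

theorem abs_matrixUnit_inf_sub_level (i j : ι) (f : E) :
    |t.matrixUnit i j f| ⊓ (e - t.level i) = 0 := by
  have hs := t.shift_mem i
  nth_rewrite 2 [← hs.2]
  rw [matrixUnit_apply, level, ← rieszAut.map_abs hs, ← map_sub, ← rieszAut.map_inf hs,
    abs_bandProj_inf_sub, map_zero]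

theorem abs_inv_shift_matrixUnit_inf_base {j k : ι} (hjk : j ≠ k) (l : ι) (f : E) :
    |(t.shift j)⁻¹ (t.matrixUnit k l f)| ⊓ t.base = 0 := by
  have hs := inv_mem (t.shift_mem j)
  have hdisj : |t.matrixUnit k l f| ⊓ t.level j = 0 :=
    inf_eq_zero_mono (abs_nonneg _) (t.isComponent_level j).1 le_rfl (t.level_le_sub_level hjk)
      (t.abs_matrixUnit_inf_sub_level k l f)
  rw [← t.inv_shift_level j, ← rieszAut.map_abs hs, ← rieszAut.map_inf hs, hdisj, map_zero]

theorem isMatrixUnits : IsMatrixUnits t.matrixUnit where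
  mul_same i j k := LinearMap.ext fun f => by
    rw [Module.End.mul_apply, t.matrixUnit_apply i j, t.matrixUnit_apply j k,
      ← LinearEquiv.mul_apply, inv_mul_cancel, LinearEquiv.coe_one, id_eq, bandProj_bandProj,
      ← matrixUnit_apply]
  mul_ne i j k l hjk := LinearMap.ext fun f => by
    rw [Module.End.mul_apply, matrixUnit_apply,
      bandProj_eq_zero _ _ (t.abs_inv_shift_matrixUnit_inf_base hjk l f), map_zero,
      LinearMap.zero_apply]

variable [Fintype ι]

theorem sum_matrixUnit_self_le (hf : 0 ≤ f) : ∑ i, t.matrixUnit i i f ≤ f := by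
  refine sum_le_of_pairwise_inf_eq_zero hf (fun i _ => t.matrixUnit_nonneg i i hf)
    (fun i _ => t.matrixUnit_self_le i hf) fun i _ j _ hij => ?_
  have hdisj : ∀ i, t.matrixUnit i i f ⊓ (e - t.level i) = 0 := fun i => by
    simpa only [abs_of_nonneg (t.matrixUnit_nonneg i i hf)] using
      t.abs_matrixUnit_inf_sub_level i i f
  exact t.unit.inf_eq_zero_of_inf_sub_eq_zero (t.isComponent_level i).2.1
    (t.isComponent_level j).2.1 (t.level_inf_level hij) (hdisj i) (hdisj j)

/-- The automorphisms permuting the levels of the tower and fixing everything outside of it. -/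
def permAut : Equiv.Perm ι →* (E ≃ₗ[ℝ] E) :=
  (LinearMap.GeneralLinearGroup.generalLinearEquiv ℝ E).toMonoidHom.comp
    t.isMatrixUnits.permHom.toHomUnits

theorem permAut_apply (σ : Equiv.Perm ι) (f : E) :
    t.permAut σ f = ∑ i, t.matrixUnit (σ i) i f + (f - ∑ i, t.matrixUnit i i f) := by
  simp only [← LinearMap.sum_apply]
  rfl

theorem permAut_nonneg (σ : Equiv.Perm ι) (hf : 0 ≤ f) : 0 ≤ t.permAut σ f := by
  rw [permAut_apply]
  exact add_nonneg (Finset.sum_nonneg fun i _ => t.matrixUnit_nonneg _ i hf)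
    (sub_nonneg.2 (t.sum_matrixUnit_self_le hf))

theorem permAut_unit (σ : Equiv.Perm ι) : t.permAut σ e = e := by
  simp only [permAut_apply, matrixUnit_unit, Equiv.sum_comp σ t.level, add_sub_cancel]

theorem permAut_mem_rieszAut (σ : Equiv.Perm ι) : t.permAut σ ∈ rieszAut e :=
  mem_rieszAut_of_nonneg (fun _ => t.permAut_nonneg σ)
    (fun _ hf => by rw [← map_inv]; exact t.permAut_nonneg σ⁻¹ hf) (t.permAut_unit σ)

theorem permAut_mem_cepsAut {T : E →ₗ[ℝ] E} (hT : ∀ i, t.shift i ∈ cepsAut T e)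
    (σ : Equiv.Perm ι) : t.permAut σ ∈ cepsAut T e := by
  refine ⟨t.permAut_mem_rieszAut σ, fun f => ?_⟩
  have hcol : ∀ i j, T (t.matrixUnit i j f) = T (t.matrixUnit j j f) := fun i j =>
    ((hT i).2 _).trans ((hT j).2 _).symm
  simp only [permAut_apply, map_add, map_sub, map_sum, hcol (σ _), add_sub_cancel]

end Tower

namespace IsCEPS

variable [ConditionallyCompleteLattice E] [AddCommGroup E] [IsOrderedAddMonoid E] [Module ℝ E]
  {T S : E →ₗ[ℝ] E} {e f p : E} {s t : E ≃ₗ[ℝ] E}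

theorem eq_of_map_le (h : IsCEPS T S e) (hs : s ∈ cepsAut T e) (hf : s f ≤ f) : s f = f :=
  (sub_eq_zero.1 <| h.T_strictPos _ (sub_nonneg.2 hf) <| by
    rw [map_sub, hs.2, sub_self]).symm

theorem T_abs_sub_le (h : IsCEPS T S e) (hs : s ∈ cepsAut T e) (ht : t ∈ cepsAut T e)
    (hf : 0 ≤ f) : T |s f - t f| ≤ 2 • T f := by
  have habs : |s f - t f| ≤ s f + t f := by
    simpa only [sub_eq_add_neg, abs_neg, abs_of_nonneg (rieszAut.map_nonneg hs.1 hf),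
      abs_of_nonneg (rieszAut.map_nonneg ht.1 hf)] using abs_add_le (s f) (-t f)
  exact (h.T_mono habs).trans_eq (by rw [map_add, hs.2, ht.2, two_nsmul])

theorem card_nsmul_T_le {ι : Type*} [Fintype ι] (h : IsCEPS T S e) {v : ι → E ≃ₗ[ℝ] E}
    (hv : ∀ i, v i ∈ cepsAut T e) (hp : IsComponent e p)
    (hd : Pairwise fun i j => v i p ⊓ v j p = 0) : Fintype.card ι • T p ≤ e := by
  have hcomp := fun i => rieszAut.isComponent_map (hv i).1 hp
  have hsum : ∑ i, v i p ≤ e := sum_le_of_pairwise_inf_eq_zero h.unit.1.le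
    (fun i _ => (hcomp i).1) (fun i _ => (hcomp i).2.1) (hd.set_pairwise _)
  simpa only [map_sum, (hv _).2, h.Te, Finset.sum_const, Finset.card_univ] using h.T_mono hsum

end IsCEPS

section RokhlinTower

variable [ConditionallyCompleteLattice E] [AddCommGroup E] [IsOrderedAddMonoid E] [Module ℝ E]
  {T S : E →ₗ[ℝ] E} {e : E}

section Wandering

variable [Fact (0 ≤ e)] {s : rieszAut e}

theorem isWandering_componentAut_iff {N : ℕ} {a : Component e} :
    IsWandering (componentAut s) N a ↔ ∀ j, 0 < j → j < N → a.1 ⊓ (s.1 ^ j) a.1 = 0 := by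
  simp only [IsWandering, Component.disjoint_iff_inf_eq_zero, coe_componentAut_pow_apply]

theorem exists_isWandering_le_of_isAperiodic (hs : IsAperiodic (s⁻¹).1 e e) (N : ℕ)
    {c : Component e} (hc : c ≠ ⊥) : ∃ w ≤ c, w ≠ ⊥ ∧ IsWandering (componentAut s) N w := by
  obtain ⟨k, hNk, u, hu, hq⟩ := hs N c.1 c.2 fun h => hc (Subtype.ext h)
  have hue := c.2.trans hu
  let w : Component e := ⟨_, isComponent_qComp s⁻¹.2 hue k⟩
  have hw : IsWandering (componentAut s⁻¹) N w := isWandering_componentAut_iff.2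
    fun j hj hjN => qComp_inf_pow_apply_qComp s⁻¹.2 hue hj (hjN.trans_le hNk)
  rw [map_inv] at hw
  exact ⟨w, (inf_le_left.trans inf_le_left).trans hu.2.1, fun h => hq (congrArg Subtype.val h),
    hw.of_inv⟩

theorem pairwise_inf_eq_zero_of_pairwise_disjoint {N : ℕ} {a : Component e}
    (ha : Pairwise (Disjoint on fun i : Fin N => (componentAut s ^ (i : ℕ)) a)) :
    Pairwise fun i j : Fin N => (s.1 ^ (i : ℕ)) a.1 ⊓ (s.1 ^ (j : ℕ)) a.1 = 0 := fun i j hij => by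
  simpa only [Component.disjoint_iff_inf_eq_zero, coe_componentAut_pow_apply] using ha hij

theorem IsCEPS.nsmul_T_le_of_isWandering (h : IsCEPS T S e) (hs : s.1 ∈ cepsAut T e) {N : ℕ}
    {a : Component e} (ha : IsWandering (componentAut s) N a) : N • T a.1 ≤ e := by
  simpa only [Fintype.card_fin] using h.card_nsmul_T_le (fun i : Fin N => pow_mem hs (i : ℕ)) a.2
    (pairwise_inf_eq_zero_of_pairwise_disjoint ha.pairwise_disjoint)

end Wandering

theorem IsCEPS.exists_tower {s : E ≃ₗ[ℝ] E} (h : IsCEPS T s e)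
    (hs : IsAperiodic (s⁻¹ : E ≃ₗ[ℝ] E) e e) {n : ℕ} (hn : 0 < n) :
    ∃ t : Tower e (Fin n), (∀ i, t.shift i = s ^ (i : ℕ)) ∧ n • T t.rest ≤ e := by
  have : Fact (0 ≤ e) := ⟨h.unit.1.le⟩
  have hmem := h.mem_cepsAut
  let σ : rieszAut e := ⟨s, hmem.1⟩
  obtain ⟨a, ha, hcover⟩ := exists_isWandering_iSup_eq_top (componentAut σ) (n * n)
    (fun c => exists_isWandering_le_of_isAperiodic hs (n * n))
    (fun b hb => Subtype.ext (h.eq_of_map_le (inv_mem hmem) hb))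
  obtain ⟨g, hg, hge⟩ := exists_rokhlin_tower (componentAut σ) hn hcover
  let t : Tower e (Fin n) := ⟨h.unit, g.1, g.2, fun i => s ^ (i : ℕ), fun _ => pow_mem hmem.1 _,
    pairwise_inf_eq_zero_of_pairwise_disjoint hg⟩
  refine ⟨t, fun _ => rfl, ?_⟩
  have hrest : t.rest ≤ ∑ i ∈ Finset.range n, (s ^ (i + 1)) a.1 := by
    have hle := Component.le_sum_add_sum_of_top_le_sup hge
    simp only [coe_componentAut_pow_apply] at hle
    exact sub_le_iff_le_add'.2 hle
  have hT : T t.rest ≤ n • T a.1 := by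
    simpa only [map_sum, (pow_mem hmem _).2, Finset.sum_const, Finset.card_range] using
      h.T_mono hrest
  calc n • T t.rest ≤ n • n • T a.1 := nsmul_le_nsmul_right hT n
    _ = (n * n) • T a.1 := (mul_nsmul' _ _ _).symm
    _ ≤ e := h.nsmul_T_le_of_isWandering hmem ha

end RokhlinTower

namespace Tower

variable [ConditionallyCompleteLattice E] [AddCommGroup E] [IsOrderedAddMonoid E] [Module ℝ E]
  [PosSMulMono ℝ E] {T S : E →ₗ[ℝ] E} {e u : E}

theorem shift_mul_inv_shift_matrixUnit {ι : Type*} (t : Tower e ι) (i j k : ι) (f : E) :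
    (t.shift i * (t.shift j)⁻¹) (t.matrixUnit j k f) = t.matrixUnit i k f := by
  rw [matrixUnit_apply, ← LinearEquiv.mul_apply, inv_mul_cancel_right, ← matrixUnit_apply]

theorem matrixUnit_le_level {ι : Type*} (t : Tower e ι) (i j : ι) (hu : u ≤ e) :
    t.matrixUnit i j u ≤ t.level i := by
  simpa only [map_sub, matrixUnit_unit, sub_nonneg] using
    t.matrixUnit_nonneg i j (sub_nonneg.2 hu)

theorem sub_sum_matrixUnit_self_le_rest {ι : Type*} [Fintype ι] (t : Tower e ι) (hu : u ≤ e) :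
    u - ∑ i, t.matrixUnit i i u ≤ t.rest := by
  have h := sub_nonneg.2 (t.sum_matrixUnit_self_le (sub_nonneg.2 hu))
  simp only [map_sub, matrixUnit_unit, Finset.sum_sub_distrib] at h
  rwa [sub_sub_sub_comm, sub_nonneg] at h

variable {m : ℕ} (t : Tower e (Fin (m + 1))) {s : E ≃ₗ[ℝ] E}

theorem apply_sub_permAut_finRotate (ht : ∀ i, t.shift i = s ^ (i : ℕ)) (f : E) :
    s f - t.permAut (finRotate (m + 1)) f =
      (s (t.matrixUnit (Fin.last m) (Fin.last m) f) - t.matrixUnit 0 (Fin.last m) f) +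
      (s (f - ∑ i, t.matrixUnit i i f) - (f - ∑ i, t.matrixUnit i i f)) := by
  have hstep : ∀ i : Fin m, s (t.matrixUnit i.castSucc i.castSucc f) =
      t.matrixUnit i.succ i.castSucc f := fun i => by
    rw [matrixUnit_apply, matrixUnit_apply, ht i.castSucc, ht i.succ, ← LinearEquiv.mul_apply,
      Fin.val_succ, pow_succ', Fin.val_castSucc]
  simp only [permAut_apply, finRotate_apply, Fin.sum_univ_castSucc, Fin.coeSucc_eq_succ,
    Fin.last_add_one, map_sub, map_add, map_sum, hstep]
  abel

theorem T_abs_apply_sub_permAut_finRotate_le (h : IsCEPS T s e)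
    (ht : ∀ i, t.shift i = s ^ (i : ℕ)) (hu : 0 ≤ u) (hue : u ≤ e) :
    T |s u - t.permAut (finRotate (m + 1)) u| ≤ 2 • T t.base + 2 • T t.rest := by
  have hs := h.mem_cepsAut
  have hshift : ∀ i, t.shift i ∈ cepsAut T e := fun i => ht i ▸ pow_mem hs _
  set x := t.matrixUnit (Fin.last m) (Fin.last m) u
  set r := u - ∑ i, t.matrixUnit i i u
  have hx : 0 ≤ x := t.matrixUnit_nonneg _ _ hu
  have hr : 0 ≤ r := sub_nonneg.2 (t.sum_matrixUnit_self_le hu)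
  have hTx : T x ≤ T t.base :=
    (h.T_mono (t.matrixUnit_le_level _ _ hue)).trans_eq ((hshift _).2 _)
  have hTr : T r ≤ T t.rest := h.T_mono (t.sub_sum_matrixUnit_self_le_rest hue)
  have hlast : T |s x - t.matrixUnit 0 (Fin.last m) u| ≤ 2 • T x := by
    rw [← t.shift_mul_inv_shift_matrixUnit 0 (Fin.last m)]
    exact h.T_abs_sub_le hs (mul_mem (hshift _) (inv_mem (hshift _))) hx
  have hrest : T |s r - r| ≤ 2 • T r := h.T_abs_sub_le hs (one_mem _) hr
  rw [t.apply_sub_permAut_finRotate ht]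
  calc _ ≤ _ := h.T_mono (abs_add_le _ _)
    _ ≤ 2 • T x + 2 • T r := (map_add T _ _).trans_le (add_le_add hlast hrest)
    _ ≤ _ := add_le_add (nsmul_le_nsmul_right hTx 2) (nsmul_le_nsmul_right hTr 2)

theorem isPeriodic_inv_permAut {ι : Type*} [Fintype ι] (t : Tower e ι) (σ : Equiv.Perm ι) :
    IsPeriodic ((t.permAut σ)⁻¹ : E ≃ₗ[ℝ] E) e :=
  isPeriodic_of_pow_eq_one (inv_mem (t.permAut_mem_rieszAut σ)) (orderOf_pos σ) <| by
    rw [inv_pow, ← map_pow, pow_orderOf_eq_one, map_one, inv_one]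

end Tower

theorem le_smul_of_nsmul_le [PartialOrder E] [AddCommGroup E] [IsOrderedAddMonoid E] [Module ℝ E]
    [PosSMulMono ℝ E] {n : ℕ} {c : ℝ} {x e : E} (hn : 0 < n) (hc : (n : ℝ)⁻¹ ≤ c) (he : 0 ≤ e)
    (h : n • x ≤ e) : x ≤ c • e := by
  rw [← Nat.cast_smul_eq_nsmul ℝ] at h
  calc x ≤ (n : ℝ)⁻¹ • e := (le_inv_smul_iff_of_pos (Nat.cast_pos.2 hn)).2 h
    _ ≤ c • e := smul_le_smul_of_nonneg_right hc he

theorem aperiodic_approx_periodic_general [ConditionallyCompleteLattice E]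
    [AddCommGroup E] [IsOrderedAddMonoid E] [Module ℝ E] [PosSMulMono ℝ E]
    (T S : E →ₗ[ℝ] E) (e : E) (hCEPS : IsCEPS T S e) (hS : Function.Surjective ⇑S)
    (hAp : IsAperiodic (Function.surjInv hS) e e) (ε : ℝ) (hε0 : 0 < ε) :
    ∃ S' : E →ₗ[ℝ] E, ∃ hS' : Function.Surjective ⇑S',
      IsCEPS T S' e ∧
      IsPeriodic (Function.surjInv hS') e ∧
      ∀ u : E, IsComponent e u →
        T |S u - S' u| ≤ ε • e := by
  obtain ⟨s, rfl⟩ : ∃ s : E ≃ₗ[ℝ] E, s = S := ⟨.ofBijective S ⟨hCEPS.injective, hS⟩, rfl⟩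
  rw [surjInv_coe_linearEquiv] at hAp
  obtain ⟨m, hm⟩ := exists_nat_one_div_lt (show 0 < ε / 4 by positivity)
  have hscale : ∀ x, (m + 1) • x ≤ e → x ≤ (ε / 4) • e := fun x =>
    le_smul_of_nsmul_le m.succ_pos (by simpa only [Nat.cast_succ, ← one_div] using hm.le)
      hCEPS.unit.1.le
  obtain ⟨t, ht, hrest⟩ := hCEPS.exists_tower hAp m.succ_pos
  have hshift : ∀ i, t.shift i ∈ cepsAut T e := fun i => ht i ▸ pow_mem hCEPS.mem_cepsAut _
  have hbase : (m + 1) • T t.base ≤ e := by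
    simpa only [Fintype.card_fin] using
      hCEPS.card_nsmul_T_le hshift t.isComponent_base t.pairwise_disjoint
  let s' := t.permAut (finRotate (m + 1))
  refine ⟨s', s'.surjective, hCEPS.of_mem_cepsAut (t.permAut_mem_cepsAut hshift _), ?_,
    fun u hu => ?_⟩
  · rw [surjInv_coe_linearEquiv]
    exact t.isPeriodic_inv_permAut _
  · calc T |s u - s' u| ≤ 2 • T t.base + 2 • T t.rest :=
          t.T_abs_apply_sub_permAut_finRotate_le hCEPS ht hu.1 hu.2.1
      _ ≤ 2 • (ε / 4) • e + 2 • (ε / 4) • e := add_le_add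
          (nsmul_le_nsmul_right (hscale _ hbase) 2) (nsmul_le_nsmul_right (hscale _ hrest) 2)
      _ = ε • e := by module

/-- **Approximation of aperiodic maps by periodic ones.** -/
theorem aperiodic_approx_periodic {E : Type*} [ConditionallyCompleteLattice E]
    [AddCommGroup E] [Module ℝ E] [CovariantClass E E (· + ·) (· ≤ ·)] [PosSMulMono ℝ E]
    (T S : E →ₗ[ℝ] E) (e : E) (hCEPS : IsCEPS T S e)
    (hErg : {f : E | S f = f} = Set.range T)
    (hTuc : TUnivComplete T)
    (hS : Function.Surjective ⇑S)
    (hAp : IsAperiodic (Function.surjInv hS) e e)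
    (ε : ℝ) (hε0 : 0 < ε) (hε1 : ε < 1) :
    ∃ S' : E →ₗ[ℝ] E, ∃ hS' : Function.Surjective ⇑S',
      IsCEPS T S' e ∧
      IsPeriodic (Function.surjInv hS') e ∧
      ∀ u : E, IsComponent e u →
        T ((S u - S' u) ⊔ -(S u - S' u)) ≤ ε • e := by
  have : IsOrderedAddMonoid E :=
    { add_le_add_left := fun _ _ h c => by
        simpa only [add_comm _ c] using CovariantClass.elim (μ := (· + ·)) c h }
  exact aperiodic_approx_periodic_general T S e hCEPS hS hAp ε hε0
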